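/- arXiv:1307.0743 — 2 statements merged into one kernel-verified Lean document; each statement's English description precedes it below -/
import Mathlib

section
/- Let K ⊆ U ⊆ F be number fields such that U/K is a Galois extension, F/U is a cyclic (Galois with cyclic Galois group) extension, and F/K is Galois. Then there are infinitely many primes 𝔭_U of U such that 𝔭_U has exactly one prime of F lying above it and the prime 𝔭_K = 𝔭_U ∩ K of K splits completely in U/K (i.e. the number of primes of U above 𝔭_K equals [U : K]). -/
open IsDedekindDomain NumberField

/-!
For a finite extension `L/M`, all primes of `L` outside a set of Dirichlet density zero are
unramified of degree one over `M`; when `L/M` is Galois they therefore lie over completely split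
primes. Since a completely split prime has `[L : M]` primes above it, all of the same norm, and the
poles of `ζ_M` and `ζ_L` at `1` are simple, the completely split primes of `M` have density
`1 / [L : M]`.

If `F/U` is cyclic of degree `n`, then for each `d ∣ n` a prime of `U` splits completely in the
subextension of degree `d` exactly when `d` divides the number of primes of `F` above it. Möbius
inversion over `d ∣ n` gives density `∑ μ(d) / d = φ(n) / n > 0` to the primes of `U` with a single
prime of `F` above them. This survives intersection with the density-one set of primes of `U`
lying over a prime of `K` that splits completely in `U`.

The simple pole of `ζ_K` enters through `∑ N(P)⁻ˢ = log ζ_K(s) + O(1)`. It is obtained without the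
Euler product, by writing every ideal as a square times a product of distinct primes, which gives
`∏ (1 + N(P)⁻ˢ) ≤ ζ_K(s) ≤ ζ_K(2s) ∏ (1 + N(P)⁻ˢ)`.
-/

open Filter Topology Asymptotics Module

section DirichletSeries

variable {ι : Type*} {N : ι → ℕ}

theorem LSeries_term_card_fiber_eq {s : ℝ} (hs : s ≠ 0) (n : ℕ) :
    LSeries.term (fun n ↦ (Nat.card {i // N i = n} : ℂ)) s n =
      ((∑' i : {i // N i = n}, (N i : ℝ) ^ (-s) : ℝ) : ℂ) := by
  have hconst : ∀ i : {i // N i = n}, (N i : ℝ) ^ (-s) = (n : ℝ) ^ (-s) := fun i ↦ by rw [i.2]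
  rw [tsum_congr hconst, tsum_const, nsmul_eq_mul]
  rcases eq_or_ne n 0 with rfl | hn
  · simp [Real.zero_rpow (neg_ne_zero.mpr hs)]
  · rw [LSeries.term_of_ne_zero hn, Real.rpow_neg n.cast_nonneg]
    push_cast [Complex.ofReal_cpow n.cast_nonneg]
    rw [div_eq_mul_inv]

theorem hasSum_rpow_neg_of_LSeriesSummable_card_fiber (hN : ∀ n, Finite {i // N i = n}) {s : ℝ}
    (hs : s ≠ 0) (h : LSeriesSummable (fun n ↦ (Nat.card {i // N i = n} : ℂ)) s) :
    HasSum (fun i ↦ (N i : ℝ) ^ (-s)) (LSeries (fun n ↦ (Nat.card {i // N i = n} : ℂ)) s).re := by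
  have hterm := LSeries_term_card_fiber_eq (N := N) hs
  have hsummable : Summable fun i ↦ (N i : ℝ) ^ (-s) := by
    rw [← (Equiv.sigmaFiberEquiv N).summable_iff,
      summable_sigma_of_nonneg (by exact fun _ ↦ Real.rpow_nonneg (Nat.cast_nonneg _) _)]
    exact ⟨fun n ↦ .of_finite, Complex.summable_ofReal.mp <| h.congr hterm⟩
  have hfiber := hsummable.hasSum.tsum_fiberwise N
  rw [LSeries, tsum_congr hterm, ← Complex.ofReal_tsum, Complex.ofReal_re]
  convert hsummable.hasSum using 1
  exact hfiber.tsum_eq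

end DirichletSeries

section DedekindZeta

variable (K : Type*) [Field K] [NumberField K]

theorem LSeriesSummable_card_absNorm {s : ℝ} (hs : 1 < s) :
    LSeriesSummable (fun n ↦ (Nat.card {I : Ideal (𝓞 K) // I.absNorm = n} : ℂ)) s := by
  -- A divergent `LSeries` has the junk value `0`, which the positive residue excludes near `1`.
  have hne : ∀ᶠ t : ℝ in 𝓝[>] 1, dedekindZeta K t ≠ 0 := by
    filter_upwards [(tendsto_sub_one_mul_dedekindZeta_nhdsGT K).eventually_ne
      (Complex.ofReal_ne_zero.mpr (dedekindZeta_residue_ne_zero K))] with t ht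
    exact right_ne_zero_of_mul ht
  obtain ⟨t, ht, hts⟩ := (hne.and (Ioo_mem_nhdsGT hs)).exists
  exact LSeriesSummable.of_re_le_re (by simpa using hts.2.le) <|
    not_imp_comm.mp (LSeries.eq_zero_of_not_LSeriesSummable _ _) ht

theorem hasSum_absNorm_rpow_neg {s : ℝ} (hs : 1 < s) :
    HasSum (fun I : Ideal (𝓞 K) ↦ (I.absNorm : ℝ) ^ (-s)) (dedekindZeta K s).re :=
  hasSum_rpow_neg_of_LSeriesSummable_card_fiber Ideal.finite_setOfPred_absNorm_eq (by positivity)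
    (LSeriesSummable_card_absNorm K hs)

theorem tendsto_sub_one_mul_re_dedekindZeta :
    Tendsto (fun s : ℝ ↦ (s - 1) * (dedekindZeta K s).re) (𝓝[>] 1)
      (𝓝 (dedekindZeta_residue K)) := by
  simpa [Function.comp_def] using
    (Complex.continuous_re.tendsto _).comp (tendsto_sub_one_mul_dedekindZeta_nhdsGT K)

theorem log_re_dedekindZeta_add_log_sub_one_isBigO :
    (fun s : ℝ ↦ Real.log (dedekindZeta K s).re + Real.log (s - 1)) =O[𝓝[>] 1] fun _ ↦ (1 : ℝ) := by
  have hres := dedekindZeta_residue_pos K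
  have htend := tendsto_sub_one_mul_re_dedekindZeta K
  refine ((htend.log hres.ne').isBigO_one ℝ).congr' ?_ .rfl
  filter_upwards [htend.eventually_ne hres.ne'] with s hs
  rw [Real.log_mul (left_ne_zero_of_mul hs) (right_ne_zero_of_mul hs), add_comm]

end DedekindZeta

theorem summable_sq_of_nonneg {ι : Type*} {f : ι → ℝ} (hf : ∀ i, 0 ≤ f i) (hsum : Summable f) :
    Summable fun i ↦ f i ^ 2 := by
  simp only [sq]
  exact (hsum.mul_of_nonneg hsum hf hf).comp_injective (i := fun i ↦ (i, i))
    fun _ _ h ↦ congrArg Prod.fst h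

theorem sub_sq_le_log_one_add {x : ℝ} (hx : 0 ≤ x) : x - x ^ 2 ≤ Real.log (1 + x) :=
  calc x - x ^ 2 ≤ 1 - (1 + x)⁻¹ := by
        rw [← sub_nonneg]
        have : 1 - (1 + x)⁻¹ - (x - x ^ 2) = x ^ 3 / (1 + x) := by field_simp; ring
        rw [this]; positivity
    _ ≤ Real.log (1 + x) := Real.one_sub_inv_le_log_of_pos (by positivity)

theorem rexp_tsum_log_one_add {ι : Type*} {f : ι → ℝ} (hf : ∀ i, 0 ≤ f i) (hsum : Summable f) :
    Real.exp (∑' i, Real.log (1 + f i)) = ∏' i, (1 + f i) :=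
  Real.rexp_tsum_eq_tprod (fun i ↦ by linarith [hf i])
    (Real.summable_log_one_add_of_summable hsum)

section IdealSum

variable {R : Type*} [CommRing R] [IsDedekindDomain R]

theorem injective_prod_asIdeal :
    Function.Injective fun t : Finset (HeightOneSpectrum R) ↦ ∏ P ∈ t, P.asIdeal := by
  have hsub (t t' : Finset (HeightOneSpectrum R))
      (h : ∏ P ∈ t, P.asIdeal = ∏ P ∈ t', P.asIdeal) : t ⊆ t' := fun P hP ↦ by
    obtain ⟨Q, hQ, hPQ⟩ := (P.prime.dvd_finsetProd_iff _).mp (h ▸ Finset.dvd_prod_of_mem _ hP)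
    have hle : Q.asIdeal ≤ P.asIdeal := Ideal.le_of_dvd hPQ
    rwa [← HeightOneSpectrum.ext (Q.isMaximal.eq_of_le P.isPrime.ne_top hle)]
  exact fun t t' h ↦ (hsub t t' h).antisymm (hsub t' t h.symm)

theorem exists_eq_prod_asIdeal_mul_sq (I : Ideal R) :
    ∃ (t : Finset (HeightOneSpectrum R)) (J : Ideal R), I = (∏ P ∈ t, P.asIdeal) * J ^ 2 := by
  classical
  induction I using UniqueFactorizationMonoid.induction_on_prime with
  | h₁ => exact ⟨∅, ⊥, by simp⟩
  | h₂ I hunit => exact ⟨∅, 1, by rw [Ideal.isUnit_iff.mp hunit]; simp [← Ideal.one_eq_top]⟩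
  | h₃ I Q _ hQ ih =>
    obtain ⟨t, J, rfl⟩ := ih
    obtain ⟨P, rfl⟩ : ∃ P : HeightOneSpectrum R, P.asIdeal = Q :=
      ⟨⟨Q, Ideal.isPrime_of_prime hQ, hQ.ne_zero⟩, rfl⟩
    by_cases hPt : P ∈ t
    · refine ⟨t.erase P, P.asIdeal * J, ?_⟩
      rw [← Finset.mul_prod_erase t _ hPt]
      ring
    · exact ⟨insert P t, J, by rw [Finset.prod_insert hPt, mul_assoc]⟩

variable {f : Ideal R →* ℝ}

theorem summable_prod_asIdeal (hsum : Summable f) :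
    Summable fun t : Finset (HeightOneSpectrum R) ↦ ∏ P ∈ t, f P.asIdeal := by
  simpa only [Function.comp_def, map_prod] using hsum.comp_injective injective_prod_asIdeal

theorem tprod_one_add_asIdeal_le_tsum (hf : ∀ I, 0 ≤ f I) (hsum : Summable f) :
    ∏' P : HeightOneSpectrum R, (1 + f P.asIdeal) ≤ ∑' I, f I := by
  rw [tprod_one_add (summable_prod_asIdeal hsum)]
  simpa only [Function.comp_def, map_prod] using
    tsum_comp_le_tsum_of_inj hsum hf injective_prod_asIdeal

theorem tsum_le_tprod_one_add_asIdeal_mul_tsum_sq (hf : ∀ I, 0 ≤ f I) (hsum : Summable f) :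
    ∑' I, f I ≤ (∏' P : HeightOneSpectrum R, (1 + f P.asIdeal)) * ∑' I, f I ^ 2 := by
  have hprod : ∀ t : Finset (HeightOneSpectrum R), 0 ≤ ∏ P ∈ t, f P.asIdeal :=
    fun t ↦ Finset.prod_nonneg fun P _ ↦ hf _
  have hsum' := summable_prod_asIdeal hsum
  have hsq := summable_sq_of_nonneg hf hsum
  choose t J htJ using exists_eq_prod_asIdeal_mul_sq (R := R)
  have hinj : Function.Injective fun I ↦ (t I, J I) := fun I I' h ↦ by
    obtain ⟨ht, hJ⟩ : t I = t I' ∧ J I = J I' := Prod.ext_iff.mp h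
    rw [htJ I, htJ I', ht, hJ]
  rw [tprod_one_add hsum', tsum_mul_tsum_of_summable_norm hsum'.norm hsq.norm]
  refine hsum.tsum_le_tsum_of_inj _ hinj (fun c _ ↦ mul_nonneg (hprod _) (sq_nonneg _))
    (fun I ↦ ?_) (hsum'.mul_of_nonneg hsq hprod fun _ ↦ sq_nonneg _)
  conv_lhs => rw [htJ I]
  rw [map_mul, map_pow, map_prod]

theorem tsum_asIdeal_le_log_tsum_add_tsum_sq (hf : ∀ I, 0 ≤ f I) (hsum : Summable f) :
    ∑' P : HeightOneSpectrum R, f P.asIdeal ≤ Real.log (∑' I, f I) + ∑' I, f I ^ 2 := by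
  have hsq := summable_sq_of_nonneg hf hsum
  have hinj := HeightOneSpectrum.asIdeal_injective (R := R)
  have hsumP : Summable fun P : HeightOneSpectrum R ↦ f P.asIdeal :=
    hsum.comp_injective hinj
  have hexp := rexp_tsum_log_one_add (fun P : HeightOneSpectrum R ↦ hf P.asIdeal) hsumP
  have hsqP := hsq.comp_injective hinj
  have hlog := Real.summable_log_one_add_of_summable hsumP
  calc ∑' P : HeightOneSpectrum R, f P.asIdeal
      ≤ ∑' P : HeightOneSpectrum R, (Real.log (1 + f P.asIdeal) + f P.asIdeal ^ 2) :=
        hsumP.tsum_le_tsum (fun P ↦ by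
          linarith [sub_sq_le_log_one_add (hf P.asIdeal)]) (hlog.add hsqP)
    _ = Real.log (∏' P : HeightOneSpectrum R, (1 + f P.asIdeal)) +
          ∑' P : HeightOneSpectrum R, f P.asIdeal ^ 2 := by
        rw [← hexp, Real.log_exp]
        exact hlog.tsum_add hsqP
    _ ≤ Real.log (∑' I, f I) + ∑' I, f I ^ 2 := by
        gcongr
        · rw [← hexp]; exact Real.exp_pos _
        · exact tprod_one_add_asIdeal_le_tsum hf hsum
        · exact tsum_comp_le_tsum_of_inj hsq (fun I ↦ sq_nonneg (f I)) hinj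

theorem log_tsum_le_tsum_asIdeal_add_log_tsum_sq (hf : ∀ I, 0 ≤ f I) (hsum : Summable f) :
    Real.log (∑' I, f I) ≤
      ∑' P : HeightOneSpectrum R, f P.asIdeal + Real.log (∑' I, f I ^ 2) := by
  have hsumP : Summable fun P : HeightOneSpectrum R ↦ f P.asIdeal :=
    hsum.comp_injective HeightOneSpectrum.asIdeal_injective
  have hexp := rexp_tsum_log_one_add (fun P : HeightOneSpectrum R ↦ hf P.asIdeal) hsumP
  have hpos : 0 < ∑' I, f I :=
    hsum.tsum_pos hf 1 (by rw [map_one]; exact one_pos)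
  have hpos_sq : 0 < ∑' I, f I ^ 2 :=
    (summable_sq_of_nonneg hf hsum).tsum_pos (fun I ↦ sq_nonneg (f I)) 1 (by
      rw [map_one]; norm_num)
  calc Real.log (∑' I, f I)
      ≤ Real.log ((∏' P : HeightOneSpectrum R, (1 + f P.asIdeal)) * ∑' I, f I ^ 2) :=
        Real.log_le_log hpos (tsum_le_tprod_one_add_asIdeal_mul_tsum_sq hf hsum)
    _ = ∑' P : HeightOneSpectrum R, Real.log (1 + f P.asIdeal) + Real.log (∑' I, f I ^ 2) := by
        rw [← hexp,
          Real.log_mul (Real.exp_ne_zero _) hpos_sq.ne', Real.log_exp]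
    _ ≤ ∑' P : HeightOneSpectrum R, f P.asIdeal + Real.log (∑' I, f I ^ 2) := by
        gcongr with P
        · exact Real.summable_log_one_add_of_summable hsumP
        · linarith [Real.log_le_sub_one_of_pos (x := 1 + f P.asIdeal) (by linarith [hf P.asIdeal])]

theorem abs_tsum_asIdeal_sub_log_tsum_le (hf : ∀ I, 0 ≤ f I) (hsum : Summable f) :
    |∑' P : HeightOneSpectrum R, f P.asIdeal - Real.log (∑' I, f I)| ≤ ∑' I, f I ^ 2 := by
  have hlog : Real.log (∑' I, f I ^ 2) ≤ ∑' I, f I ^ 2 :=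
    Real.log_le_self (tsum_nonneg fun I ↦ sq_nonneg (f I))
  rw [abs_sub_le_iff]
  constructor
  · linarith [tsum_asIdeal_le_log_tsum_add_tsum_sq hf hsum]
  · linarith [log_tsum_le_tsum_asIdeal_add_log_tsum_sq hf hsum]

end IdealSum

section PrimeIdealZetaSum

variable {K : Type*} [Field K] [NumberField K]

/-- The completely multiplicative weight `I ↦ (N I) ^ s` on ideals; its sum at exponent `-s` is
`ζ_K(s)`. -/
noncomputable def absNormRpow (K : Type*) [Field K] [NumberField K] (s : ℝ) :
    Ideal (𝓞 K) →* ℝ where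
  toFun I := (I.absNorm : ℝ) ^ s
  map_one' := by simp
  map_mul' I J := by rw [map_mul, Nat.cast_mul, Real.mul_rpow (by positivity) (by positivity)]

theorem absNormRpow_apply (s : ℝ) (I : Ideal (𝓞 K)) : absNormRpow K s I = (I.absNorm : ℝ) ^ s :=
  rfl

theorem absNormRpow_nonneg (s : ℝ) (I : Ideal (𝓞 K)) : 0 ≤ absNormRpow K s I :=
  Real.rpow_nonneg (Nat.cast_nonneg _) _

theorem absNormRpow_sq (s : ℝ) (I : Ideal (𝓞 K)) :
    absNormRpow K s I ^ 2 = (I.absNorm : ℝ) ^ (2 * s) := by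
  rw [absNormRpow_apply, mul_comm, Real.rpow_mul (Nat.cast_nonneg _), Real.rpow_two]

theorem one_lt_absNorm (P : HeightOneSpectrum (𝓞 K)) : 1 < P.asIdeal.absNorm := by
  have hne_zero : P.asIdeal.absNorm ≠ 0 := by
    simpa [Ideal.absNorm_eq_zero_iff] using P.ne_bot
  have hne_one : P.asIdeal.absNorm ≠ 1 := by
    simpa [Ideal.absNorm_eq_one_iff] using P.isPrime.ne_top
  omega

theorem absNorm_rpow_neg_le (I : Ideal (𝓞 K)) {s t : ℝ} (hs : 0 < s) (hst : s ≤ t) :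
    (I.absNorm : ℝ) ^ (-t) ≤ (I.absNorm : ℝ) ^ (-s) := by
  rcases I.absNorm.eq_zero_or_pos with h | h
  · simp [h, Real.zero_rpow, hs.ne', (hs.trans_le hst).ne']
  · exact Real.rpow_le_rpow_of_exponent_le (by exact_mod_cast h) (by linarith)

theorem re_dedekindZeta_anti {s t : ℝ} (hs : 1 < s) (hst : s ≤ t) :
    (dedekindZeta K t).re ≤ (dedekindZeta K s).re :=
  hasSum_le (fun I ↦ absNorm_rpow_neg_le I (by linarith) hst)
    (hasSum_absNorm_rpow_neg K (hs.trans_le hst)) (hasSum_absNorm_rpow_neg K hs)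

theorem summable_asIdeal_absNorm_rpow_neg {s : ℝ} (hs : 1 < s) :
    Summable fun P : HeightOneSpectrum (𝓞 K) ↦ (P.asIdeal.absNorm : ℝ) ^ (-s) :=
  (hasSum_absNorm_rpow_neg K hs).summable.comp_injective HeightOneSpectrum.asIdeal_injective

theorem abs_primeIdealZetaSum_univ_sub_log_le {s : ℝ} (hs : 1 < s) :
    |(Set.univ : Set (HeightOneSpectrum (𝓞 K))).primeIdealZetaSum s -
        Real.log (dedekindZeta K s).re| ≤
      (dedekindZeta K (2 * s : ℝ)).re := by
  have hsum := hasSum_absNorm_rpow_neg K hs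
  have hsq : ∑' I : Ideal (𝓞 K), absNormRpow K (-s) I ^ 2 = (dedekindZeta K (2 * s : ℝ)).re := by
    simp_rw [absNormRpow_sq, mul_neg]
    exact (hasSum_absNorm_rpow_neg K (by linarith)).tsum_eq
  rw [Set.primeIdealZetaSum_def,
    tsum_univ fun P : HeightOneSpectrum (𝓞 K) ↦ (P.asIdeal.absNorm : ℝ) ^ (-s), ← hsq,
    ← hsum.tsum_eq]
  exact abs_tsum_asIdeal_sub_log_tsum_le (absNormRpow_nonneg (-s)) hsum.summable

theorem primeIdealZetaSum_univ_add_log_sub_one_isBigO :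
    (fun s ↦ (Set.univ : Set (HeightOneSpectrum (𝓞 K))).primeIdealZetaSum s + Real.log (s - 1))
      =O[𝓝[>] 1] fun _ ↦ (1 : ℝ) := by
  have hbound : (fun s : ℝ ↦ (Set.univ : Set (HeightOneSpectrum (𝓞 K))).primeIdealZetaSum s -
      Real.log (dedekindZeta K s).re) =O[𝓝[>] 1] fun _ ↦ (1 : ℝ) := by
    refine .of_bound (dedekindZeta K (2 : ℝ)).re ?_
    filter_upwards [self_mem_nhdsWithin] with s (hs : 1 < s)
    rw [norm_one, mul_one]
    exact (abs_primeIdealZetaSum_univ_sub_log_le hs).trans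
      (re_dedekindZeta_anti one_lt_two (by linarith))
  exact (hbound.add (log_re_dedekindZeta_add_log_sub_one_isBigO K)).congr_left fun s ↦ by ring

theorem tendsto_neg_log_sub_one_nhdsGT_one :
    Tendsto (fun s : ℝ ↦ -Real.log (s - 1)) (𝓝[>] 1) atTop := by
  have hsub : Tendsto (fun s : ℝ ↦ s - 1) (𝓝[>] 1) (𝓝[>] 0) := by
    refine tendsto_nhdsWithin_iff.mpr ⟨?_, ?_⟩
    · have h : Tendsto (fun s : ℝ ↦ s - 1) (𝓝 1) (𝓝 0) := by
        simpa using (tendsto_id (x := 𝓝 (1 : ℝ))).sub_const 1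
      exact h.mono_left nhdsWithin_le_nhds
    · filter_upwards [self_mem_nhdsWithin] with s (hs : 1 < s) using sub_pos.mpr hs
  exact tendsto_neg_atBot_atTop.comp (Real.tendsto_log_nhdsGT_zero.comp hsub)

theorem primeIdealZetaSum_univ_isEquivalent :
    (fun s ↦ (Set.univ : Set (HeightOneSpectrum (𝓞 K))).primeIdealZetaSum s)
      ~[𝓝[>] 1] fun s ↦ -Real.log (s - 1) := by
  have hone : (fun _ : ℝ ↦ (1 : ℝ)) =o[𝓝[>] 1] fun s : ℝ ↦ -Real.log (s - 1) :=
    isLittleO_const_left.mpr <| .inr <|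
      tendsto_norm_atTop_atTop.comp tendsto_neg_log_sub_one_nhdsGT_one
  simpa [IsEquivalent, Pi.sub_def] using
    primeIdealZetaSum_univ_add_log_sub_one_isBigO.trans_isLittleO hone

theorem hasDirichletDensity_iff_tendsto_div_neg_log {S : Set (HeightOneSpectrum (𝓞 K))} {δ : ℝ} :
    S.HasDirichletDensity δ ↔
      Tendsto (fun s ↦ S.primeIdealZetaSum s / -Real.log (s - 1)) (𝓝[>] 1) (𝓝 δ) :=
  (IsEquivalent.refl.div primeIdealZetaSum_univ_isEquivalent).tendsto_nhds_iff

end PrimeIdealZetaSum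

section DirichletDensity

variable {K : Type*} [Field K] [NumberField K] {S T : Set (HeightOneSpectrum (𝓞 K))} {δ ε : ℝ}

theorem summable_subtype_absNorm_rpow_neg (S : Set (HeightOneSpectrum (𝓞 K))) {s : ℝ} (hs : 1 < s) :
    Summable fun p : S ↦ (p.1.asIdeal.absNorm : ℝ) ^ (-s) :=
  (summable_asIdeal_absNorm_rpow_neg hs).subtype S

theorem hasSum_primeIdealZetaSum (S : Set (HeightOneSpectrum (𝓞 K))) {s : ℝ} (hs : 1 < s) :
    HasSum (fun p : HeightOneSpectrum (𝓞 K) ↦ S.indicator 1 p * (p.asIdeal.absNorm : ℝ) ^ (-s))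
      (S.primeIdealZetaSum s) := by
  have h : HasSum ((fun p ↦ (p.asIdeal.absNorm : ℝ) ^ (-s)) ∘ ((↑) : S → HeightOneSpectrum (𝓞 K)))
      (S.primeIdealZetaSum s) := by
    rw [Set.primeIdealZetaSum_def]
    exact (summable_subtype_absNorm_rpow_neg S hs).hasSum
  convert hasSum_subtype_iff_indicator.mp h using 2 with p
  by_cases hp : p ∈ S <;> simp [hp]

theorem primeIdealZetaSum_mono (hST : S ⊆ T) {s : ℝ} (hs : 1 < s) :
    S.primeIdealZetaSum s ≤ T.primeIdealZetaSum s := by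
  refine hasSum_le (fun p ↦ ?_) (hasSum_primeIdealZetaSum S hs) (hasSum_primeIdealZetaSum T hs)
  refine mul_le_mul_of_nonneg_right ?_ (Real.rpow_nonneg (Nat.cast_nonneg _) _)
  exact Set.indicator_le_indicator_of_subset hST (fun _ ↦ zero_le_one) p

theorem primeIdealZetaSum_diff (hTS : T ⊆ S) {s : ℝ} (hs : 1 < s) :
    (S \ T).primeIdealZetaSum s = S.primeIdealZetaSum s - T.primeIdealZetaSum s := by
  have h := (hasSum_primeIdealZetaSum S hs).sub (hasSum_primeIdealZetaSum T hs)
  simp_rw [← sub_mul, ← Pi.sub_apply (S.indicator 1), ← Set.indicator_sdiff hTS] at h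
  exact (hasSum_primeIdealZetaSum (S \ T) hs).unique h

theorem hasDirichletDensity_diff (hS : S.HasDirichletDensity δ) (hT : T.HasDirichletDensity ε)
    (hTS : T ⊆ S) : (S \ T).HasDirichletDensity (δ - ε) := by
  refine (hS.sub hT).congr' ?_
  filter_upwards [self_mem_nhdsWithin] with s (hs : 1 < s)
  rw [primeIdealZetaSum_diff hTS hs, sub_div]

theorem hasDirichletDensity_univ :
    (Set.univ : Set (HeightOneSpectrum (𝓞 K))).HasDirichletDensity 1 := by
  have hpos := (primeIdealZetaSum_univ_isEquivalent (K := K)).symm.tendsto_atTop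
    tendsto_neg_log_sub_one_nhdsGT_one |>.eventually_gt_atTop 0
  refine tendsto_const_nhds.congr' ?_
  filter_upwards [hpos] with s hs
  rw [div_self hs.ne']

theorem hasDirichletDensity_compl (hS : S.HasDirichletDensity δ) :
    Sᶜ.HasDirichletDensity (1 - δ) := by
  rw [Set.compl_eq_univ_sdiff]
  exact hasDirichletDensity_diff hasDirichletDensity_univ hS (Set.subset_univ S)

theorem hasDirichletDensity_zero_of_subset (hT : T.HasDirichletDensity 0) (hST : S ⊆ T) :
    S.HasDirichletDensity 0 := by
  refine squeeze_zero' (.of_forall fun s ↦ ?_) ?_ hT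
  · exact div_nonneg (S.primeIdealZetaSum_nonneg s) (Set.univ.primeIdealZetaSum_nonneg s)
  · filter_upwards [self_mem_nhdsWithin] with s (hs : 1 < s)
    exact div_le_div_of_nonneg_right (primeIdealZetaSum_mono hST hs)
      (Set.univ.primeIdealZetaSum_nonneg s)

theorem hasDirichletDensity_one_of_subset (hS : S.HasDirichletDensity 1) (hST : S ⊆ T) :
    T.HasDirichletDensity 1 := by
  have hcompl : Tᶜ.HasDirichletDensity 0 :=
    hasDirichletDensity_zero_of_subset (by simpa using hasDirichletDensity_compl hS)
      (Set.compl_subset_compl.mpr hST)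
  simpa using hasDirichletDensity_compl hcompl

theorem hasDirichletDensity_inter (hS : S.HasDirichletDensity δ) (hT : T.HasDirichletDensity 1) :
    (S ∩ T).HasDirichletDensity δ := by
  have hdiff : (S \ T).HasDirichletDensity 0 :=
    hasDirichletDensity_zero_of_subset (by simpa using hasDirichletDensity_compl hT)
      (Set.sdiff_subset_compl S T)
  simpa [Set.sdiff_sdiff_right_self] using hasDirichletDensity_diff hS hdiff Set.sdiff_subset

theorem hasDirichletDensity_zero_of_summable
    (hS : Summable fun p : S ↦ (p.1.asIdeal.absNorm : ℝ) ^ (-1 : ℝ)) :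
    S.HasDirichletDensity 0 := by
  rw [hasDirichletDensity_iff_tendsto_div_neg_log]
  have hlog_nonneg := tendsto_neg_log_sub_one_nhdsGT_one.eventually_ge_atTop 0
  refine squeeze_zero' ?_ ?_
    (tendsto_const_nhds.div_atTop (a := ∑' p : S, (p.1.asIdeal.absNorm : ℝ) ^ (-1 : ℝ))
      tendsto_neg_log_sub_one_nhdsGT_one)
  all_goals filter_upwards [self_mem_nhdsWithin, hlog_nonneg] with s (hs : 1 < s) hlog
  · exact div_nonneg (S.primeIdealZetaSum_nonneg s) hlog
  · exact div_le_div_of_nonneg_right ((summable_subtype_absNorm_rpow_neg S hs).tsum_le_tsum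
      (fun p ↦ absNorm_rpow_neg_le p.1.asIdeal one_pos hs.le) hS) hlog

theorem hasDirichletDensity_zero_of_finite (hS : S.Finite) : S.HasDirichletDensity 0 :=
  have := hS.to_subtype
  hasDirichletDensity_zero_of_summable .of_finite

theorem infinite_of_hasDirichletDensity_pos (hS : S.HasDirichletDensity δ) (hδ : 0 < δ) :
    S.Infinite := fun hfin ↦
  hδ.ne (tendsto_nhds_unique (hasDirichletDensity_zero_of_finite hfin) hS)

theorem hasDirichletDensity_of_sum_mul_indicator {ι : Type*} {I : Finset ι} {a δ : ι → ℝ}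
    {S : ι → Set (HeightOneSpectrum (𝓞 K))} (hS : ∀ i ∈ I, (S i).HasDirichletDensity (δ i))
    (hT : ∀ p, ∑ i ∈ I, a i * (S i).indicator 1 p = T.indicator 1 p) :
    T.HasDirichletDensity (∑ i ∈ I, a i * δ i) := by
  refine (tendsto_finsetSum I fun i hi ↦ (hS i hi).const_mul (a i)).congr' ?_
  filter_upwards [self_mem_nhdsWithin] with s (hs : 1 < s)
  simp_rw [← mul_div_assoc, ← Finset.sum_div]
  congr 1
  have hsum := hasSum_sum fun i (_ : i ∈ I) ↦ (hasSum_primeIdealZetaSum (S i) hs).mul_left (a i)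
  simp_rw [← mul_assoc, ← Finset.sum_mul, hT] at hsum
  exact hsum.unique (hasSum_primeIdealZetaSum T hs)

end DirichletDensity

theorem hasSum_comp_of_hasSum_ncard_fiber_mul {α β : Type*} {f : α → β} {g : β → ℝ} {c : ℝ}
    (hf : ∀ b, (f ⁻¹' {b}).Finite) (hg : ∀ b, 0 ≤ g b)
    (hsum : HasSum (fun b ↦ (f ⁻¹' {b}).ncard * g b) c) : HasSum (g ∘ f) c := by
  have hfiber (b : β) : HasSum (fun a : {a // f a = b} ↦ g (f a)) ((f ⁻¹' {b}).ncard * g b) := by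
    have : Finite {a // f a = b} := hf b
    have := Fintype.ofFinite {a // f a = b}
    convert hasSum_fintype (fun a : {a // f a = b} ↦ g (f a)) using 1
    rw [Finset.sum_congr rfl fun a _ ↦ congrArg g a.2, Finset.sum_const, nsmul_eq_mul,
      Finset.card_univ, ← Nat.card_eq_fintype_card, ← Nat.card_coe_set_eq]
    rfl
  rw [← (Equiv.sigmaFiberEquiv f).hasSum_iff]
  refine HasSum.sigma_of_hasSum hsum hfiber ?_
  refine (summable_sigma_of_nonneg fun _ ↦ hg _).mpr ⟨fun b ↦ (hfiber b).summable, ?_⟩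
  exact hsum.summable.congr fun b ↦ (hfiber b).tsum_eq.symm

theorem summable_comp_of_ncard_fiber_le {α β : Type*} {f : α → β} {g : β → ℝ} {n : ℕ}
    (hf : ∀ b, (f ⁻¹' {b}).Finite) (hn : ∀ b, (f ⁻¹' {b}).ncard ≤ n) (hg : ∀ b, 0 ≤ g b)
    (hsum : Summable g) : Summable (g ∘ f) := by
  have hbound : Summable fun b ↦ (f ⁻¹' {b}).ncard * g b :=
    (hsum.mul_left (n : ℝ)).of_nonneg_of_le (fun b ↦ mul_nonneg (Nat.cast_nonneg _) (hg b))
      fun b ↦ mul_le_mul_of_nonneg_right (by exact_mod_cast hn b) (hg b)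
  exact (hasSum_comp_of_hasSum_ncard_fiber_mul hf hg hbound.hasSum).summable

section FundamentalIdentity

variable {R : Type*} [CommRing R] [IsDomain R] (p : Ideal R) [p.IsPrime]
  (S : Type*) [CommRing S] [Algebra R S] [Module.Finite R S] [Module.Flat R S]

theorem ncard_primesOver_le_finrank : (p.primesOver S).ncard ≤ finrank R S := by
  have := (Algebra.QuasiFinite.finite_primesOver (S := S) p).fintype
  rw [← Ideal.sum_ramification_inertia_eq_finrank p S, ← Set.fintypeCard_eq_ncard,
    ← Finset.card_univ, Finset.card_eq_sum_ones]
  exact Finset.sum_le_sum fun P _ ↦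
    have := P.2.1
    Nat.mul_pos (Ideal.ramificationIdx_pos P.1 R) (Ideal.inertiaDeg_pos P.1 R)

variable {p S}

theorem inertiaDeg_eq_one_of_ncard_primesOver_eq_finrank
    (h : (p.primesOver S).ncard = finrank R S) (P : Ideal S) [P.IsPrime] [P.LiesOver p] :
    P.inertiaDeg R = 1 := by
  have := (Algebra.QuasiFinite.finite_primesOver (S := S) p).fintype
  rw [← Ideal.sum_ramification_inertia_eq_finrank p S, ← Set.fintypeCard_eq_ncard,
    ← Finset.card_univ, Finset.card_eq_sum_ones, Finset.sum_eq_sum_iff_of_le] at h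
  · exact Nat.eq_one_of_mul_eq_one_left (h ⟨P, ‹_›, ‹_›⟩ (Finset.mem_univ _)).symm
  · exact fun P _ ↦
      have := P.2.1
      Nat.mul_pos (Ideal.ramificationIdx_pos P.1 R) (Ideal.inertiaDeg_pos P.1 R)

end FundamentalIdentity

section PrimesOver

variable {A B : Type*} [CommRing A] [IsDomain A] [CommRing B] [IsDomain B] [Algebra A B]
  [Module.Finite A B] [FaithfulSMul A B]

theorem image_asIdeal_preimage_under (p : HeightOneSpectrum A) :
    HeightOneSpectrum.asIdeal '' (HeightOneSpectrum.under (B := B) A ⁻¹' {p}) =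
      p.asIdeal.primesOver B := by
  ext Q
  constructor
  · rintro ⟨P, rfl, rfl⟩
    exact ⟨P.isPrime, ⟨rfl⟩⟩
  · rintro ⟨hQ, hQp⟩
    exact ⟨⟨Q, hQ, Ideal.ne_bot_of_mem_primesOver p.ne_bot ⟨hQ, hQp⟩⟩,
      HeightOneSpectrum.ext hQp.over.symm, rfl⟩

theorem finite_preimage_under (p : HeightOneSpectrum A) :
    (HeightOneSpectrum.under (B := B) A ⁻¹' {p}).Finite := by
  refine .of_finite_image ?_ HeightOneSpectrum.asIdeal_injective.injOn
  rw [image_asIdeal_preimage_under]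
  exact Algebra.QuasiFinite.finite_primesOver p.asIdeal

theorem ncard_preimage_under (p : HeightOneSpectrum A) :
    (HeightOneSpectrum.under (B := B) A ⁻¹' {p}).ncard = (p.asIdeal.primesOver B).ncard := by
  rw [← image_asIdeal_preimage_under,
    Set.ncard_image_of_injective _ HeightOneSpectrum.asIdeal_injective]

end PrimesOver

section ResidueDegree

variable {M L : Type*} [Field M] [NumberField M] [Field L] [NumberField L] [Algebra M L]

theorem absNorm_under_pow_inertiaDeg (P : HeightOneSpectrum (𝓞 L)) :
    (P.under (𝓞 M)).asIdeal.absNorm ^ P.asIdeal.inertiaDeg (𝓞 M) = P.asIdeal.absNorm :=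
  have : P.asIdeal.LiesOver (P.under (𝓞 M)).asIdeal := ⟨rfl⟩
  Ideal.absNorm_pow_inertiaDeg (P.under (𝓞 M)).asIdeal P.asIdeal

theorem absNorm_rpow_neg_one_le_absNorm_under {P : HeightOneSpectrum (𝓞 L)}
    (hP : P.asIdeal.inertiaDeg (𝓞 M) ≠ 1) :
    (P.asIdeal.absNorm : ℝ) ^ (-1 : ℝ) ≤ ((P.under (𝓞 M)).asIdeal.absNorm : ℝ) ^ (-2 : ℝ) := by
  have hpos := Ideal.inertiaDeg_pos P.asIdeal (𝓞 M)
  have hone := one_lt_absNorm (P.under (𝓞 M))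
  rw [← absNorm_under_pow_inertiaDeg (M := M) P, Nat.cast_pow, ← Real.rpow_natCast,
    ← Real.rpow_mul (Nat.cast_nonneg _)]
  refine Real.rpow_le_rpow_of_exponent_le (by exact_mod_cast hone.le) ?_
  have : (2 : ℝ) ≤ P.asIdeal.inertiaDeg (𝓞 M) := by exact_mod_cast (by omega)
  linarith

variable (M L)

theorem hasDirichletDensity_inertiaDeg_eq_one :
    {P : HeightOneSpectrum (𝓞 L) | P.asIdeal.inertiaDeg (𝓞 M) = 1}.HasDirichletDensity 1 := by
  set S := {P : HeightOneSpectrum (𝓞 L) | P.asIdeal.inertiaDeg (𝓞 M) = 1}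
  have hsum : Summable ((fun p : HeightOneSpectrum (𝓞 M) ↦ (p.asIdeal.absNorm : ℝ) ^ (-2 : ℝ)) ∘
      HeightOneSpectrum.under (B := 𝓞 L) (𝓞 M)) :=
    summable_comp_of_ncard_fiber_le finite_preimage_under
      (fun p ↦ (ncard_preimage_under p).trans_le (ncard_primesOver_le_finrank p.asIdeal (𝓞 L)))
      (fun p ↦ by positivity) (summable_asIdeal_absNorm_rpow_neg one_lt_two)
  have hcompl : Sᶜ.HasDirichletDensity 0 := hasDirichletDensity_zero_of_summable <|
    (hsum.subtype Sᶜ).of_nonneg_of_le (fun P ↦ by positivity)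
      fun P ↦ absNorm_rpow_neg_one_le_absNorm_under P.2
  simpa using hasDirichletDensity_compl hcompl

theorem hasDirichletDensity_ramificationIdx_eq_one :
    {P : HeightOneSpectrum (𝓞 L) | P.asIdeal.ramificationIdx (𝓞 M) = 1}.HasDirichletDensity 1 := by
  have hfin : {P : HeightOneSpectrum (𝓞 L) | P.asIdeal ∣ differentIdeal (𝓞 M) (𝓞 L)}.Finite :=
    Ideal.finite_factors differentIdeal_ne_bot
  have hcompl := hasDirichletDensity_compl (hasDirichletDensity_zero_of_finite hfin)
  rw [sub_zero] at hcompl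
  refine hasDirichletDensity_one_of_subset hcompl fun P hP ↦ ?_
  rw [Set.mem_ofPred_eq, Ideal.ramificationIdx_eq_one_iff, ← not_dvd_differentIdeal_iff]
  exact hP

end ResidueDegree

section CompleteSplitting

variable (M L : Type*) [Field M] [Field L] [Algebra M L]

/-- The primes of `M` that split completely in `L`, expressed as having `[L : M]` primes of `L`
above them. -/
def primesSplittingCompletely : Set (HeightOneSpectrum (𝓞 M)) :=
  {p | (p.asIdeal.primesOver (𝓞 L)).ncard = finrank M L}

variable {M L}

theorem mem_primesSplittingCompletely {p : HeightOneSpectrum (𝓞 M)} :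
    p ∈ primesSplittingCompletely M L ↔ (p.asIdeal.primesOver (𝓞 L)).ncard = finrank M L :=
  Iff.rfl

variable [NumberField M] [NumberField L]

theorem absNorm_under_of_mem_primesSplittingCompletely {P : HeightOneSpectrum (𝓞 L)}
    (hP : P.under (𝓞 M) ∈ primesSplittingCompletely M L) :
    (P.under (𝓞 M)).asIdeal.absNorm = P.asIdeal.absNorm := by
  rw [mem_primesSplittingCompletely, IsFractionRing.finrank_eq (𝓞 M) M (𝓞 L) L] at hP
  have : P.asIdeal.LiesOver (P.under (𝓞 M)).asIdeal := ⟨rfl⟩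
  rw [← absNorm_under_pow_inertiaDeg (M := M) P,
    inertiaDeg_eq_one_of_ncard_primesOver_eq_finrank hP P.asIdeal, pow_one]

theorem primeIdealZetaSum_preimage_under {S : Set (HeightOneSpectrum (𝓞 M))}
    (hS : S ⊆ primesSplittingCompletely M L) {s : ℝ} (hs : 1 < s) :
    (HeightOneSpectrum.under (B := 𝓞 L) (𝓞 M) ⁻¹' S).primeIdealZetaSum s =
      finrank M L * S.primeIdealZetaSum s := by
  refine (hasSum_primeIdealZetaSum _ hs).unique ?_
  have hcomp : HasSum ((fun p ↦ S.indicator 1 p * (p.asIdeal.absNorm : ℝ) ^ (-s)) ∘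
      HeightOneSpectrum.under (B := 𝓞 L) (𝓞 M)) (finrank M L * S.primeIdealZetaSum s) := by
    refine hasSum_comp_of_hasSum_ncard_fiber_mul finite_preimage_under
      (fun p ↦ mul_nonneg (Set.indicator_nonneg (fun _ _ ↦ zero_le_one) p)
        (Real.rpow_nonneg (Nat.cast_nonneg _) _)) ?_
    refine ((hasSum_primeIdealZetaSum S hs).mul_left (finrank M L : ℝ)).congr_fun fun p ↦ ?_
    by_cases hp : p ∈ S
    · rw [ncard_preimage_under, mem_primesSplittingCompletely.mp (hS hp)]
    · simp [hp]
  refine hcomp.congr_fun fun P ↦ ?_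
  by_cases hP : P.under (𝓞 M) ∈ S
  · rw [Function.comp_apply, absNorm_under_of_mem_primesSplittingCompletely (hS hP)]
    rfl
  · simp [hP]

variable (M L)

theorem ncard_primesOver_mul_ramificationIdx_mul_inertiaDeg [IsGalois M L] (p : Ideal (𝓞 M))
    [p.IsPrime] (P : Ideal (𝓞 L)) [P.IsPrime] [P.LiesOver p] :
    (p.primesOver (𝓞 L)).ncard * (P.ramificationIdx (𝓞 M) * P.inertiaDeg (𝓞 M)) =
      finrank M L := by
  rw [← IsGaloisGroup.card_eq_finrank (L ≃ₐ[M] L) M L,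
    ← Ideal.ncard_primesOver_mul_ramificationIdxIn_mul_inertiaDegIn p (𝓞 L) (L ≃ₐ[M] L),
    Ideal.ramificationIdxIn_eq_ramificationIdx p P (L ≃ₐ[M] L),
    Ideal.inertiaDegIn_eq_inertiaDeg p P (L ≃ₐ[M] L)]

theorem ncard_primesOver_dvd_finrank [IsGalois M L] (p : HeightOneSpectrum (𝓞 M)) :
    (p.asIdeal.primesOver (𝓞 L)).ncard ∣ finrank M L := by
  obtain ⟨P, _, _⟩ : Nonempty (p.asIdeal.primesOver (𝓞 L)) := inferInstance
  exact ⟨_, (ncard_primesOver_mul_ramificationIdx_mul_inertiaDeg M L p.asIdeal P).symm⟩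

theorem hasDirichletDensity_preimage_primesSplittingCompletely [IsGalois M L] :
    (HeightOneSpectrum.under (B := 𝓞 L) (𝓞 M) ⁻¹'
      primesSplittingCompletely M L).HasDirichletDensity 1 := by
  refine hasDirichletDensity_one_of_subset
    (hasDirichletDensity_inter (hasDirichletDensity_inertiaDeg_eq_one M L)
      (hasDirichletDensity_ramificationIdx_eq_one M L)) ?_
  rintro P ⟨hf : P.asIdeal.inertiaDeg (𝓞 M) = 1, he : P.asIdeal.ramificationIdx (𝓞 M) = 1⟩
  have : P.asIdeal.LiesOver (P.under (𝓞 M)).asIdeal := ⟨rfl⟩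
  have h := ncard_primesOver_mul_ramificationIdx_mul_inertiaDeg M L (P.under (𝓞 M)).asIdeal
    P.asIdeal
  rwa [he, hf, mul_one, mul_one] at h

theorem hasDirichletDensity_primesSplittingCompletely [IsGalois M L] :
    (primesSplittingCompletely M L).HasDirichletDensity (finrank M L : ℝ)⁻¹ := by
  have hn : (finrank M L : ℝ) ≠ 0 := by exact_mod_cast finrank_pos.ne'
  have h := hasDirichletDensity_preimage_primesSplittingCompletely M L
  rw [hasDirichletDensity_iff_tendsto_div_neg_log] at h ⊢
  rw [← mul_one (_)⁻¹]
  refine (h.const_mul (finrank M L : ℝ)⁻¹).congr' ?_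
  filter_upwards [self_mem_nhdsWithin] with s (hs : 1 < s)
  rw [primeIdealZetaSum_preimage_under subset_rfl hs, mul_div_assoc, inv_mul_cancel_left₀ hn]

end CompleteSplitting

section CyclicGroup

variable {G : Type*} [Finite G]

theorem range_powMonoidHom_index [CommGroup G] [IsCyclic G] (H : Subgroup G) :
    (powMonoidHom H.index : G →* G).range = H := by
  have hle : (powMonoidHom H.index : G →* G).range ≤ H := by
    rintro _ ⟨g, rfl⟩
    exact H.pow_index_mem g
  refine hle.eq_of_not_lt fun hlt ↦ (Subgroup.index_strictAnti hlt).ne' ?_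
  rw [IsCyclic.index_powMonoidHom_range, Nat.gcd_eq_right H.index_dvd_card]

theorem le_iff_index_dvd_index [Group G] [IsCyclic G] {D H : Subgroup G} :
    D ≤ H ↔ H.index ∣ D.index := by
  let _ : CommGroup G := IsCyclic.commGroup
  refine ⟨Subgroup.index_dvd_of_le, fun ⟨k, hk⟩ ↦ ?_⟩
  rw [← range_powMonoidHom_index D, hk]
  rintro _ ⟨g, rfl⟩
  rw [powMonoidHom_apply, pow_mul']
  exact H.pow_index_mem _

theorem exists_subgroup_index_eq [Group G] [IsCyclic G] {d : ℕ} (hd : d ∣ Nat.card G) :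
    ∃ H : Subgroup G, H.index = d := by
  let _ : CommGroup G := IsCyclic.commGroup
  exact ⟨(powMonoidHom d).range, by rw [IsCyclic.index_powMonoidHom_range, Nat.gcd_eq_right hd]⟩

end CyclicGroup

section CyclicExtension

open scoped Pointwise

theorem index_stabilizer_eq_ncard_primesOver {A B G : Type*} [CommRing A] [CommRing B]
    [Algebra A B] [Group G] [Finite G] [MulSemiringAction G B] [IsGaloisGroup G A B]
    (p : Ideal A) (Q : Ideal B) [Q.IsPrime] [Q.LiesOver p] :
    (MulAction.stabilizer G Q).index = (p.primesOver B).ncard := by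
  have : Algebra.IsInvariant A B G := IsGaloisGroup.isInvariant
  have : SMulCommClass G A B := IsGaloisGroup.commutes
  rw [MulAction.index_stabilizer, Algebra.IsInvariant.orbit_eq_primesOver A B G p Q]

variable {U F : Type*} [Field U] [NumberField U] [Field F] [NumberField F] [Algebra U F]
  [IsGalois U F]

theorem ncard_primesOver_mul_relIndex_stabilizer (E : IntermediateField U F) [IsGalois U E]
    (p : Ideal (𝓞 U)) (Q : Ideal (𝓞 F)) [Q.IsPrime] [Q.LiesOver p] :
    (p.primesOver (𝓞 E)).ncard * (MulAction.stabilizer Gal(F/U) Q).relIndex E.fixingSubgroup =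
      (MulAction.stabilizer Gal(F/U) Q).index := by
  have : IsGaloisGroup E.fixingSubgroup E F :=
    inferInstanceAs (IsGaloisGroup (fixingSubgroup Gal(F/U) (E : Set F)) E F)
  have := IsGaloisGroup.of_isFractionRing E.fixingSubgroup (𝓞 E) (𝓞 F) E F
  have : Q.LiesOver (Q.under (𝓞 E)) := ⟨rfl⟩
  rw [index_stabilizer_eq_ncard_primesOver p Q,
    ← Ideal.ncard_primesOver_mul_ncard_primesOver (Q.under (𝓞 E)) Gal(E/U) (𝓞 F) Gal(F/U),
    ← index_stabilizer_eq_ncard_primesOver (G := E.fixingSubgroup) (Q.under (𝓞 E)) Q]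
  rfl

theorem mem_primesSplittingCompletely_iff_finrank_dvd [IsCyclic Gal(F/U)]
    (E : IntermediateField U F) {p : HeightOneSpectrum (𝓞 U)} :
    p ∈ primesSplittingCompletely U E ↔ finrank U E ∣ (p.asIdeal.primesOver (𝓞 F)).ncard := by
  have := IsAbelianGalois.of_isCyclic U F
  obtain ⟨Q, _, _⟩ : Nonempty (p.asIdeal.primesOver (𝓞 F)) := inferInstance
  have hmul := ncard_primesOver_mul_relIndex_stabilizer E p.asIdeal Q
  rw [mem_primesSplittingCompletely, IntermediateField.finrank_eq_fixingSubgroup_index,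
    ← index_stabilizer_eq_ncard_primesOver (G := Gal(F/U)) p.asIdeal Q]
  refine ⟨fun h ↦ h ▸ Dvd.intro _ hmul, fun h ↦ ?_⟩
  rw [← Subgroup.relIndex_mul_index (le_iff_index_dvd_index.mpr h), mul_comm] at hmul
  exact Nat.eq_of_mul_eq_mul_left (Nat.pos_of_ne_zero Subgroup.index_ne_zero_of_finite) hmul

variable (U F)

theorem hasDirichletDensity_dvd_ncard_primesOver [IsCyclic Gal(F/U)] {d : ℕ}
    (hd : d ∣ finrank U F) :
    {p : HeightOneSpectrum (𝓞 U) |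
      d ∣ (p.asIdeal.primesOver (𝓞 F)).ncard}.HasDirichletDensity (d : ℝ)⁻¹ := by
  rw [← IsGalois.card_aut_eq_finrank U F] at hd
  obtain ⟨H, rfl⟩ := exists_subgroup_index_eq hd
  let E := IntermediateField.fixedField H
  have := IsAbelianGalois.of_isCyclic U F
  have hE : finrank U E = H.index := by
    rw [E.finrank_eq_fixingSubgroup_index, IntermediateField.fixingSubgroup_fixedField]
  have h := hasDirichletDensity_primesSplittingCompletely U E
  simp_rw [← hE, ← mem_primesSplittingCompletely_iff_finrank_dvd E]
  exact h

end CyclicExtension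

section Moebius

open ArithmeticFunction ArithmeticFunction.Moebius

theorem sum_divisors_moebius_div {n : ℕ} (hn : 0 < n) :
    ∑ d ∈ n.divisors, (μ d : ℝ) * (d : ℝ)⁻¹ = n.totient / n := by
  have h := (sum_eq_iff_sum_mul_moebius_eq (R := ℝ) (f := fun k ↦ (k.totient : ℝ))
    (g := fun k ↦ (k : ℝ))).mp (fun k _ ↦ by exact_mod_cast Nat.sum_totient k) n hn
  rw [Nat.sum_divisorsAntidiagonal (f := fun a b ↦ (μ a : ℝ) * (b : ℝ))] at h
  rw [← h, Finset.sum_div]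
  refine Finset.sum_congr rfl fun d hd ↦ ?_
  have hn0 : (n : ℝ) ≠ 0 := by exact_mod_cast hn.ne'
  have hd0 : (d : ℝ) ≠ 0 := by exact_mod_cast (Nat.pos_of_mem_divisors hd).ne'
  rw [Nat.cast_div (Nat.dvd_of_mem_divisors hd) hd0]
  field_simp

theorem sum_divisors_moebius (R : Type*) [Ring R] (m : ℕ) :
    ∑ d ∈ m.divisors, (μ d : R) = if m = 1 then 1 else 0 := by
  have h := congrArg (fun f : ArithmeticFunction R ↦ f m) coe_zeta_mul_coe_moebius
  simpa only [coe_zeta_mul_apply, one_apply, intCoe_apply] using h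

theorem sum_divisors_ite_dvd_moebius (R : Type*) [Ring R] {n m : ℕ} (hn : n ≠ 0) (hm : m ∣ n) :
    ∑ d ∈ n.divisors, (if d ∣ m then (μ d : R) else 0) = if m = 1 then 1 else 0 := by
  rw [← Finset.sum_filter, Nat.divisors_filter_dvd_of_dvd hn hm, sum_divisors_moebius]

end Moebius

section NonSplit

open scoped ArithmeticFunction.Moebius

variable (U F : Type*) [Field U] [NumberField U] [Field F] [NumberField F] [Algebra U F]
  [IsGalois U F] [IsCyclic Gal(F/U)]

theorem hasDirichletDensity_ncard_primesOver_eq_one :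
    {p : HeightOneSpectrum (𝓞 U) | (p.asIdeal.primesOver (𝓞 F)).ncard = 1}.HasDirichletDensity
      ((finrank U F).totient / finrank U F : ℝ) := by
  rw [← sum_divisors_moebius_div finrank_pos]
  refine hasDirichletDensity_of_sum_mul_indicator
    (fun d hd ↦ hasDirichletDensity_dvd_ncard_primesOver U F (Nat.dvd_of_mem_divisors hd))
    fun p ↦ ?_
  classical
  simpa only [Set.indicator_apply, Set.mem_ofPred_eq, Pi.one_apply, mul_ite, mul_one, mul_zero]
    using sum_divisors_ite_dvd_moebius ℝ finrank_pos.ne' (ncard_primesOver_dvd_finrank U F p)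

end NonSplit

theorem existsUnique_comap_eq_iff_ncard_primesOver_eq_one {A : Type*} (B : Type*) [CommRing A]
    [IsDomain A] [CommRing B] [IsDomain B] [Algebra A B] [Module.Finite A B] [FaithfulSMul A B]
    (p : HeightOneSpectrum A) :
    (∃! w : HeightOneSpectrum B, w.asIdeal.comap (algebraMap A B) = p.asIdeal) ↔
      (p.asIdeal.primesOver B).ncard = 1 := by
  rw [← ncard_preimage_under, Set.ncard_eq_one]
  simp only [Set.eq_singleton_iff_unique_mem, ExistsUnique, Set.mem_preimage,
    Set.mem_singleton_iff, HeightOneSpectrum.ext_iff]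
  rfl

theorem ncard_comap_eq_comap {A B : Type*} [CommRing A]
    [IsDomain A] [CommRing B] [IsDomain B] [Algebra A B] [Module.Finite A B] [FaithfulSMul A B]
    (P : HeightOneSpectrum B) :
    {w : HeightOneSpectrum B | w.asIdeal.comap (algebraMap A B) =
      P.asIdeal.comap (algebraMap A B)}.ncard = ((P.under A).asIdeal.primesOver B).ncard := by
  rw [← ncard_preimage_under]
  congr 1
  ext w
  exact (HeightOneSpectrum.ext_iff (x := w.under A) (y := P.under A)).symm

theorem infinitely_many_nonsplit_primes_over_split_primes_general
    (K U F : Type*) [Field K] [Field U] [Field F]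
    [NumberField K] [NumberField U] [NumberField F]
    [Algebra K U] [Algebra U F]
    [IsGalois K U] [IsGalois U F] [IsCyclic (F ≃ₐ[U] F)] :
    {𝔭U : HeightOneSpectrum (𝓞 U) |
        (∃! w : HeightOneSpectrum (𝓞 F),
          w.asIdeal.comap (algebraMap (𝓞 U) (𝓞 F)) = 𝔭U.asIdeal) ∧
        {w : HeightOneSpectrum (𝓞 U) |
            w.asIdeal.comap (algebraMap (𝓞 K) (𝓞 U)) =
              𝔭U.asIdeal.comap (algebraMap (𝓞 K) (𝓞 U))}.ncard =
          Module.finrank K U}.Infinite := by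
  simp_rw [existsUnique_comap_eq_iff_ncard_primesOver_eq_one (𝓞 F), ncard_comap_eq_comap]
  have hdensity := hasDirichletDensity_inter (hasDirichletDensity_ncard_primesOver_eq_one U F)
    (hasDirichletDensity_preimage_primesSplittingCompletely K U)
  refine infinite_of_hasDirichletDensity_pos hdensity (div_pos ?_ ?_)
  · exact_mod_cast Nat.totient_pos.mpr finrank_pos
  · exact_mod_cast finrank_pos

/-- Lemma: if `U/K` is Galois, `F/U` is cyclic and `F/K` is Galois (all number fields), then
there are infinitely many primes of `U` that do not split in `F/U` (exactly one prime of `F`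
above them) and lie above a prime of `K` that splits completely in `U/K` (the number of
primes of `U` above it is `[U : K]`). -/
theorem infinitely_many_nonsplit_primes_over_split_primes
    (K U F : Type*) [Field K] [Field U] [Field F]
    [NumberField K] [NumberField U] [NumberField F]
    [Algebra K U] [Algebra U F] [Algebra K F] [IsScalarTower K U F]
    [IsGalois K U] [IsGalois U F] [IsCyclic (F ≃ₐ[U] F)] [IsGalois K F] :
    {𝔭U : HeightOneSpectrum (𝓞 U) |
        (∃! w : HeightOneSpectrum (𝓞 F),
          w.asIdeal.comap (algebraMap (𝓞 U) (𝓞 F)) = 𝔭U.asIdeal) ∧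
        {w : HeightOneSpectrum (𝓞 U) |
            w.asIdeal.comap (algebraMap (𝓞 K) (𝓞 U)) =
              𝔭U.asIdeal.comap (algebraMap (𝓞 K) (𝓞 U))}.ncard =
          Module.finrank K U}.Infinite :=
  infinitely_many_nonsplit_primes_over_split_primes_general K U F
end

section
/- For every rational prime q and every integer m ≥ 1 there exists a number field K such that: K/ℚ is Galois with cyclic Galois group of order q^m; K is totally real (every embedding of K into ℂ has image contained in ℝ); and q does not split in K/ℚ, i.e. there is exactly one prime of K lying above q. -/
open NumberField

/-!
Since `q` is totally ramified in the cyclotomic field `ℚ(ζ)` of conductor `q ^ (k + 1)`, exactly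
one prime lies above it there, and hence in every subfield. The Galois group of `ℚ(ζ)` is
`(ℤ/q ^ (k + 1))ˣ`, with complex conjugation corresponding to `-1`, so it suffices to find a
subgroup containing `-1` whose quotient is cyclic of order `q ^ m`. For odd `q` the unit group is
cyclic of order `q ^ k * (q - 1)`, and one takes `k = m` and the elements of exponent `q - 1`. For
`q = 2` the subgroup `{±1}` of `(ℤ/2 ^ (m + 2))ˣ` is complementary to the cyclic group of order
`2 ^ m` generated by `5`.
-/

section UnitGroups

theorem disjoint_zpowers_of_prime_orderOf {G : Type*} [Group G] {g : G} (hg : (orderOf g).Prime)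
    {K : Subgroup G} (hgK : g ∉ K) : Disjoint K (Subgroup.zpowers g) := by
  have : Fact (Nat.card (Subgroup.zpowers g)).Prime := ⟨Nat.card_zpowers g ▸ hg⟩
  rw [← Subgroup.subgroupOf_eq_bot]
  refine (K.subgroupOf (Subgroup.zpowers g)).eq_bot_or_eq_top_of_prime_card.resolve_right ?_
  rwa [Subgroup.subgroupOf_eq_top, Subgroup.zpowers_le]

theorem neg_one_notMem_ker_unitsMap {d n : ℕ} (hd : 2 < d) (hdn : d ∣ n) :
    (-1 : (ZMod n)ˣ) ∉ (ZMod.unitsMap hdn).ker := by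
  have : Fact (2 < d) := ⟨hd⟩
  intro h
  apply ZMod.neg_one_ne_one (n := d)
  simpa [ZMod.unitsMap_def] using congrArg Units.val (MonoidHom.mem_ker.mp h)

theorem isComplement'_zpowers_five_zpowers_neg_one (m : ℕ) {u : (ZMod (2 ^ (m + 2)))ˣ}
    (hu : (u : ZMod (2 ^ (m + 2))) = 5) :
    (Subgroup.zpowers u).IsComplement' (Subgroup.zpowers (-1)) := by
  have four_dvd : 4 ∣ 2 ^ (m + 2) := pow_dvd_pow 2 (Nat.le_add_left 2 m)
  have u_mem_ker : u ∈ (ZMod.unitsMap four_dvd).ker := by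
    ext
    simp only [ZMod.unitsMap_def, Units.coe_map, MonoidHom.coe_coe, hu, map_ofNat]
    rfl
  have neg_one_notMem : -1 ∉ Subgroup.zpowers u := fun h ↦
    neg_one_notMem_ker_unitsMap (by norm_num) four_dvd (Subgroup.zpowers_le.mpr u_mem_ker h)
  have order_u : orderOf u = 2 ^ m := by rw [← orderOf_units, hu, ZMod.orderOf_five]
  have order_neg_one : orderOf (-1 : (ZMod (2 ^ (m + 2)))ˣ) = 2 :=
    orderOf_eq_prime (by simp) fun h ↦ neg_one_notMem (h.symm ▸ one_mem _)
  refine Subgroup.isComplement'_of_card_mul_and_disjoint ?_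
    (disjoint_zpowers_of_prime_orderOf (order_neg_one.symm ▸ Nat.prime_two) neg_one_notMem)
  rw [Nat.card_zpowers, Nat.card_zpowers, order_u, order_neg_one, Nat.card_eq_fintype_card,
    ZMod.card_units_eq_totient, Nat.totient_prime_pow_succ Nat.prime_two, Nat.add_one_sub_one,
    mul_one, pow_succ]

theorem exists_subgroup_units_two_pow (m : ℕ) :
    ∃ H : Subgroup (ZMod (2 ^ (m + 2)))ˣ,
      H.index = 2 ^ m ∧ IsCyclic ((ZMod (2 ^ (m + 2)))ˣ ⧸ H) ∧ -1 ∈ H := by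
  have coprime_five : Nat.Coprime 5 (2 ^ (m + 2)) := Nat.Coprime.pow_right _ (by norm_num)
  let u := ZMod.unitOfCoprime 5 coprime_five
  have hu : (u : ZMod (2 ^ (m + 2))) = 5 := ZMod.coe_unitOfCoprime 5 coprime_five
  have compl := isComplement'_zpowers_five_zpowers_neg_one m hu
  refine ⟨Subgroup.zpowers (-1), ?_, ?_, Subgroup.mem_zpowers _⟩
  · rw [compl.index_eq_card, Nat.card_zpowers, ← orderOf_units, hu, ZMod.orderOf_five]
  · exact compl.QuotientMulEquiv.isCyclic.mpr inferInstance

theorem exists_subgroup_units_odd_prime_pow {q : ℕ} (hq : q.Prime) (hq2 : q ≠ 2) (m : ℕ) :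
    ∃ H : Subgroup (ZMod (q ^ (m + 1)))ˣ,
      H.index = q ^ m ∧ IsCyclic ((ZMod (q ^ (m + 1)))ˣ ⧸ H) ∧ -1 ∈ H := by
  have := ZMod.isCyclic_units_of_prime_pow q hq hq2 (m + 1)
  have : NeZero (q ^ (m + 1)) := ⟨pow_ne_zero _ hq.ne_zero⟩
  refine ⟨(powMonoidHom (q - 1) : (ZMod (q ^ (m + 1)))ˣ →* _).ker, ?_, inferInstance,
    (hq.even_sub_one hq2).neg_one_pow⟩
  rw [IsCyclic.index_powMonoidHom_ker, Nat.card_eq_fintype_card, ZMod.card_units_eq_totient,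
    Nat.totient_prime_pow_succ hq, Nat.gcd_mul_left_left,
    Nat.mul_div_cancel _ (Nat.sub_pos_of_lt hq.one_lt)]

theorem exists_subgroup_units_prime_pow {q : ℕ} (hq : q.Prime) (m : ℕ) :
    ∃ (k : ℕ) (H : Subgroup (ZMod (q ^ (k + 1)))ˣ),
      H.index = q ^ m ∧ IsCyclic ((ZMod (q ^ (k + 1)))ˣ ⧸ H) ∧ -1 ∈ H := by
  obtain rfl | hq2 := eq_or_ne q 2
  · exact ⟨m + 1, exists_subgroup_units_two_pow m⟩
  · exact ⟨m, exists_subgroup_units_odd_prime_pow hq hq2 m⟩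

end UnitGroups

section UniquePrime

theorem existsUnique_isPrime_mem_of_isIntegral {R S : Type*} [CommRing R] [CommRing S]
    [Algebra R S] [FaithfulSMul R S] [Algebra.IsIntegral R S] {x : R}
    (h : ∃! Q : Ideal S, Q.IsPrime ∧ algebraMap R S x ∈ Q) :
    ∃! P : Ideal R, P.IsPrime ∧ x ∈ P := by
  obtain ⟨Q, ⟨hQ, hxQ⟩, Q_unique⟩ := h
  refine ⟨Q.comap (algebraMap R S), ⟨Ideal.comap_isPrime _ _, hxQ⟩, ?_⟩
  rintro P ⟨hP, hxP⟩
  obtain ⟨Q', hQ', ⟨rfl⟩⟩ := (Ideal.nonempty_primesOver (S := S) P).some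
  rw [Q_unique Q' ⟨hQ', hxP⟩]

theorem existsUnique_isPrime_natCast_mem_of_ringHom {K L : Type*} [Field K] [NumberField K]
    [Field L] [NumberField L] (f : K →+* L) {q : ℕ}
    (h : ∃! Q : Ideal (𝓞 L), Q.IsPrime ∧ (q : 𝓞 L) ∈ Q) :
    ∃! P : Ideal (𝓞 K), P.IsPrime ∧ (q : 𝓞 K) ∈ P := by
  let := f.toAlgebra
  exact existsUnique_isPrime_mem_of_isIntegral (S := 𝓞 L) (by rwa [map_natCast])

theorem liesOver_span_of_natCast_mem {R : Type*} [CommRing R] {q : ℕ} (hq : q.Prime)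
    {P : Ideal R} [P.IsPrime] (hqP : (q : R) ∈ P) : P.LiesOver (Ideal.span {(q : ℤ)}) := by
  have : Fact q.Prime := ⟨hq⟩
  rw [Ideal.liesOver_iff]
  refine (Int.ideal_span_isMaximal_of_prime q).eq_of_le Ideal.IsPrime.ne_top' ?_
  rw [Ideal.span_singleton_le_iff_mem, Ideal.mem_comap, map_natCast]
  exact hqP

theorem existsUnique_isPrime_natCast_mem_of_isCyclotomicExtension {q : ℕ} (hq : q.Prime) (k : ℕ)
    (L : Type*) [Field L] [NumberField L] [IsCyclotomicExtension {q ^ (k + 1)} ℚ L] :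
    ∃! P : Ideal (𝓞 L), P.IsPrime ∧ (q : 𝓞 L) ∈ P := by
  have : Fact q.Prime := ⟨hq⟩
  have hζ := IsCyclotomicExtension.zeta_spec (q ^ (k + 1)) ℚ L
  refine ⟨Ideal.span {hζ.toInteger - 1},
    ⟨IsCyclotomicExtension.Rat.isPrime_span_zeta_sub_one q k hζ,
      IsCyclotomicExtension.Rat.p_mem_span_zeta_sub_one q k hζ⟩, ?_⟩
  rintro P ⟨hP, hqP⟩
  have := liesOver_span_of_natCast_mem hq hqP
  exact IsCyclotomicExtension.Rat.eq_span_zeta_sub_one_of_liesOver q k L hζ P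

end UniquePrime

section TotallyReal

open ComplexEmbedding

theorem isTotallyReal_fixedField {k L : Type*} [Field k] [Field L] [Algebra k L] [CharZero L]
    [Algebra.IsAlgebraic ℚ L] {N : Subgroup Gal(L/k)} (hN : ∀ φ : L →+* ℂ, ∃ c ∈ N, IsConj φ c) :
    IsTotallyReal (IntermediateField.fixedField N) := by
  refine (isTotallyReal_iff_le_maximalRealSubfield
    (E := (IntermediateField.fixedField N).toSubfield)).mpr fun x hx φ ↦ ?_
  obtain ⟨c, hcN, hc⟩ := hN φ
  rw [← hc.eq, (IntermediateField.mem_fixedField_iff N x).mp hx c hcN]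

theorem im_apply_eq_zero_of_isTotallyReal {K : Type*} [Field K] [IsTotallyReal K] (σ : K →+* ℂ)
    (x : K) : (σ x).im = 0 :=
  Complex.conj_eq_iff_im.mp (RingHom.congr_fun (IsTotallyReal.complexEmbedding_isReal σ) x)

end TotallyReal

section CyclotomicSubfields

open IsCyclotomicExtension.Rat ComplexEmbedding

variable (n : ℕ) [NeZero n] (L : Type*) [Field L] [NumberField L] [IsCyclotomicExtension {n} ℚ L]

theorem galEquivZMod_symm_neg_one_apply {x : L} (hx : x ^ n = 1) :
    (galEquivZMod n L).symm (-1) x = x⁻¹ := by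
  have n_dvd : n ∣ ((-1 : (ZMod n)ˣ) : ZMod n).val + 1 := by
    rw [← ZMod.natCast_eq_zero_iff]
    simp
  apply eq_inv_of_mul_eq_one_left
  rw [galEquivZMod_apply_of_pow_eq n L _ hx, MulEquiv.apply_symm_apply, ← pow_succ]
  exact orderOf_dvd_iff_pow_eq_one.mp ((orderOf_dvd_of_pow_eq_one hx).trans n_dvd)

theorem isConj_galEquivZMod_symm_neg_one (φ : L →+* ℂ) :
    IsConj φ ((galEquivZMod n L).symm (-1)) := by
  have hζ := IsCyclotomicExtension.zeta_spec n ℚ L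
  have norm_zeta : ‖φ (IsCyclotomicExtension.zeta n ℚ L)‖ = 1 :=
    Complex.norm_eq_one_of_pow_eq_one (by rw [← map_pow, hζ.pow_eq_one, map_one]) (NeZero.ne n)
  suffices (conjugate φ).toRatAlgHom =
      (φ.comp ((galEquivZMod n L).symm (-1) : L →+* L)).toRatAlgHom from
    congrArg AlgHom.toRingHom this
  apply (hζ.powerBasis ℚ).algHom_ext
  change conjugate φ _ = φ ((galEquivZMod n L).symm (-1) _)
  rw [hζ.powerBasis_gen ℚ, galEquivZMod_symm_neg_one_apply n L hζ.pow_eq_one, map_inv₀,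
    Complex.inv_eq_conj norm_zeta, conjugate_coe_eq]

/-- The subfield of the `n`-th cyclotomic field `L` that corresponds to a subgroup `H` of
`(ℤ/nℤ)ˣ` under the Galois correspondence. -/
noncomputable def cyclotomicSubfield (H : Subgroup (ZMod n)ˣ) : IntermediateField ℚ L :=
  IntermediateField.fixedField (H.comap (galEquivZMod n L).toMonoidHom)

variable (H : Subgroup (ZMod n)ˣ)

theorem isGalois_cyclotomicSubfield : IsGalois ℚ (cyclotomicSubfield n L H) := by
  have := IsCyclotomicExtension.isGalois {n} ℚ L
  exact IsGalois.of_fixedField_normal_subgroup _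

theorem finrank_cyclotomicSubfield :
    Module.finrank ℚ (cyclotomicSubfield n L H) = H.index := by
  have := IsCyclotomicExtension.isGalois {n} ℚ L
  rw [IntermediateField.finrank_eq_fixingSubgroup_index, cyclotomicSubfield,
    IntermediateField.fixingSubgroup_fixedField]
  exact Subgroup.index_comap_of_surjective H (galEquivZMod n L).surjective

theorem isCyclic_gal_cyclotomicSubfield [IsCyclic ((ZMod n)ˣ ⧸ H)] :
    IsCyclic Gal(cyclotomicSubfield n L H/ℚ) := by
  have := IsCyclotomicExtension.isGalois {n} ℚ L
  let N := H.comap (galEquivZMod n L).toMonoidHom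
  have quotientEquiv : Gal(L/ℚ) ⧸ N ≃* (ZMod n)ˣ ⧸ H :=
    QuotientGroup.congr N H (galEquivZMod n L)
      (Subgroup.map_comap_eq_self_of_surjective (galEquivZMod n L).surjective H)
  exact ((IsGalois.normalAutEquivQuotient N).symm.trans quotientEquiv).isCyclic.mpr inferInstance

variable {H} in
theorem isTotallyReal_cyclotomicSubfield (hH : -1 ∈ H) :
    IsTotallyReal (cyclotomicSubfield n L H) :=
  isTotallyReal_fixedField fun φ ↦
    ⟨(galEquivZMod n L).symm (-1), by
      rwa [Subgroup.mem_comap, MulEquiv.coe_toMonoidHom, MulEquiv.apply_symm_apply],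
      isConj_galEquivZMod_symm_neg_one n L φ⟩

end CyclotomicSubfields

/-- Lemma: for every rational prime `q` and every `m ≥ 1` there exists a totally real cyclic
extension `K` of `ℚ` of degree `q^m` in which `q` does not split (there is exactly one prime
of `K` above `q`). -/
theorem exists_totally_real_cyclic_qm_extension_q_nonsplit
    (q m : ℕ) (hq : q.Prime) (hm : 1 ≤ m) :
    ∃ K : IntermediateField ℚ ℂ,
      FiniteDimensional ℚ K ∧
      IsGalois ℚ K ∧
      IsCyclic (K ≃ₐ[ℚ] K) ∧
      Module.finrank ℚ K = q ^ m ∧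
      (∀ σ : K →+* ℂ, ∀ x : K, (σ x).im = 0) ∧
      (∃! P : Ideal (𝓞 K), P.IsPrime ∧ (q : 𝓞 K) ∈ P) := by
  obtain ⟨k, H, index_H, cyclic_H, neg_one_mem⟩ := exists_subgroup_units_prime_pow hq m
  have : NeZero (q ^ (k + 1)) := ⟨pow_ne_zero _ hq.ne_zero⟩
  let L := CyclotomicField (q ^ (k + 1)) ℚ
  have : IsCyclotomicExtension {q ^ (k + 1)} ℚ L :=
    CyclotomicField.isCyclotomicExtension (q ^ (k + 1)) ℚ
  let F := cyclotomicSubfield (q ^ (k + 1)) L H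
  let φ : F →ₐ[ℚ] ℂ := IsAlgClosed.lift
  let e : F ≃ₐ[ℚ] φ.fieldRange := AlgEquiv.ofInjectiveField φ
  have : IsGalois ℚ F := isGalois_cyclotomicSubfield _ L H
  have : IsTotallyReal F := isTotallyReal_cyclotomicSubfield _ L neg_one_mem
  have : IsTotallyReal φ.fieldRange := .ofRingEquiv e.toRingEquiv
  have : FiniteDimensional ℚ φ.fieldRange := Module.Finite.equiv e.toLinearEquiv
  have : NumberField φ.fieldRange := ⟨⟩
  refine ⟨φ.fieldRange, inferInstance, IsGalois.of_algEquiv e, ?_, ?_, ?_, ?_⟩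
  · exact (AlgEquiv.autCongr e).isCyclic.mp (isCyclic_gal_cyclotomicSubfield _ L H)
  · rw [← e.toLinearEquiv.finrank_eq, finrank_cyclotomicSubfield, index_H]
  · exact im_apply_eq_zero_of_isTotallyReal
  · exact existsUnique_isPrime_natCast_mem_of_ringHom ((algebraMap F L).comp (e.symm : _ →+* F))
      (existsUnique_isPrime_natCast_mem_of_isCyclotomicExtension hq k L)
end
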